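/- arXiv:2212.08344 — 8 statements merged into one kernel-verified Lean document; each statement's English description precedes it below -/
import Mathlib

section
/- Let 0<α<1 and let δ₀>0, δ>0 be real numbers. For every real θ with 2δ₀/((1-α)δ) ≤ θ < 1, one has δ₀·(1+(1-θ)^{1-α}) < δ·(1-(1-θ)^{1-α}). (Equivalently, the relative rounding error bound (|x|+|y|)δ₀/|x-y| for the subtraction x−y with x=1, y=(1-θ)^{1-α} is strictly below δ, so no δ-cancellation occurs in I₁.) -/
/-!
Put `y = (1 - θ) ^ (1 - α)`. Since the exponent `1 - α` lies in `(0, 1)`, Bernoulli's inequality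
`rpow_one_add_lt_one_add_mul_self` bounds the gap `1 - y` below by `(1 - α) * θ`, and the
threshold on `θ` says exactly that `δ * (1 - α) * θ` is at least `2 * δ₀`. As `y < 1`, the sum
`δ₀ * (1 + y)` stays below `2 * δ₀`, which separates the two sides.
-/

theorem no_delta_cancellation_I1
    (α δ₀ δ : ℝ) (hα0 : 0 < α) (hα1 : α < 1) (hδ₀ : 0 < δ₀) (hδ : 0 < δ)
    (θ : ℝ) (hθ : 2 * δ₀ / ((1 - α) * δ) ≤ θ) (hθ1 : θ < 1) :
    δ₀ * (1 + (1 - θ) ^ (1 - α)) < δ * (1 - (1 - θ) ^ (1 - α)) := by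
  have hden : 0 < (1 - α) * δ := mul_pos (by linarith) hδ
  have hθ0 : 0 < θ := lt_of_lt_of_le (by positivity) hθ
  have hthr : 2 * δ₀ ≤ θ * ((1 - α) * δ) := (div_le_iff₀ hden).mp hθ
  -- Bernoulli's inequality for an exponent in `(0, 1)`, applied at `-θ`.
  have hbern : (1 - θ) ^ (1 - α) < 1 - (1 - α) * θ := by
    have h := rpow_one_add_lt_one_add_mul_self (s := -θ) (by linarith) (by linarith)
      (p := 1 - α) (by linarith) (by linarith)
    rw [← sub_eq_add_neg] at h
    linarith
  have hy1 : (1 - θ) ^ (1 - α) < 1 :=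
    Real.rpow_lt_one (by linarith) (by linarith) (by linarith)
  calc δ₀ * (1 + (1 - θ) ^ (1 - α)) < δ₀ * 2 := by gcongr; linarith
    _ ≤ δ * ((1 - α) * θ) := by linarith
    _ < δ * (1 - (1 - θ) ^ (1 - α)) := by gcongr; linarith
end

section
/- Let 0<α<1 and let δ₀>0, δ>0 be real numbers. For every real θ with √(6δ₀/((1-α)δ)) ≤ θ < 1, one has δ₀·((2-α)θ+(1-θ)^{2-α}+1) < δ·((2-α)θ+(1-θ)^{2-α}−1). (Equivalently, the relative rounding error bound (|x|+|y|)δ₀/|x−y| for the subtraction x−y with x=(2-α)θ+(1-θ)^{2-α}, y=1 is strictly below δ, so no δ-cancellation occurs in I₂.) -/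
/-!
Write `u = 1 - θ ∈ (0, 1)`, `s = 1 - α` and `D = (2 - α) θ + u ^ (2 - α) - 1`. The claim
`δ₀ (D + 2) < δ D` follows from `D < 1` and `s θ² / 2 ≤ D`, because the threshold says
`6 δ₀ ≤ s θ² δ`, whence `δ₀ (D + 2) < 3 δ₀ ≤ δ D`.

The upper bound is `u ^ (2 - α) ≤ u`. For the lower bound, `u ^ (1 + s) ≥ u (1 + s log u)` reduces
it to `u log u ≥ (u² - 1) / 2`, which is `t ≤ sinh t` at `t = -log u`.
-/

/-- This is `t ≤ sinh t` at `t = -log u`. -/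
lemma sq_sub_one_div_two_le_mul_log {u : ℝ} (hu0 : 0 < u) (hu1 : u ≤ 1) :
    (u ^ 2 - 1) / 2 ≤ u * Real.log u := by
  have h : -Real.log u ≤ Real.sinh (-Real.log u) :=
    Real.self_le_sinh_iff.2 (neg_nonneg.2 (Real.log_nonpos hu0.le hu1))
  rw [Real.sinh_neg, Real.sinh_log hu0] at h
  have h2 := mul_le_mul_of_nonneg_left h hu0.le
  have h3 : u * -((u - u⁻¹) / 2) = -((u ^ 2 - 1) / 2) := by
    field_simp
  linarith

theorem no_delta_cancellation_I2
    (α δ₀ δ : ℝ) (hα0 : 0 < α) (hα1 : α < 1) (hδ₀ : 0 < δ₀) (hδ : 0 < δ)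
    (θ : ℝ) (hθ : Real.sqrt (6 * δ₀ / ((1 - α) * δ)) ≤ θ) (hθ1 : θ < 1) :
    δ₀ * ((2 - α) * θ + (1 - θ) ^ (2 - α) + 1)
      < δ * ((2 - α) * θ + (1 - θ) ^ (2 - α) - 1) := by
  have hs : 0 < 1 - α := by linarith
  have hsd : 0 < (1 - α) * δ := mul_pos hs hδ
  have hθ0 : 0 < θ := lt_of_lt_of_le (Real.sqrt_pos.2 (by positivity)) hθ
  have hthr : 6 * δ₀ ≤ θ ^ 2 * ((1 - α) * δ) :=
    (div_le_iff₀ hsd).1 ((Real.sqrt_le_left hθ0.le).1 hθ)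
  have hu : 0 < 1 - θ := by linarith
  have hsplit : (1 - θ) ^ (2 - α) = (1 - θ) * (1 - θ) ^ (1 - α) := by
    rw [show 2 - α = 1 + (1 - α) by ring, Real.rpow_add hu, Real.rpow_one]
  have hpow_le : (1 - θ) ^ (1 - α) ≤ 1 := Real.rpow_le_one hu.le (by linarith) hs.le
  have hpow_ge : Real.log (1 - θ) * (1 - α) + 1 ≤ (1 - θ) ^ (1 - α) := by
    rw [Real.rpow_def_of_pos hu]
    exact Real.add_one_le_exp _
  have hlog := sq_sub_one_div_two_le_mul_log hu (by linarith)
  have hupper : (2 - α) * θ + (1 - θ) ^ (2 - α) < 2 := by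
    rw [hsplit]
    nlinarith [mul_le_mul_of_nonneg_left hpow_le hu.le, mul_pos hα0 hθ0]
  have hlower : (1 - α) * θ ^ 2 / 2 ≤ (2 - α) * θ + (1 - θ) ^ (2 - α) - 1 := by
    rw [hsplit]
    linarith [mul_le_mul_of_nonneg_left hpow_ge hu.le, mul_le_mul_of_nonneg_left hlog hs.le]
  calc δ₀ * ((2 - α) * θ + (1 - θ) ^ (2 - α) + 1)
      < δ₀ * 3 := mul_lt_mul_of_pos_left (by linarith) hδ₀
    _ ≤ δ * ((1 - α) * θ ^ 2 / 2) := by linarith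
    _ ≤ δ * ((2 - α) * θ + (1 - θ) ^ (2 - α) - 1) := mul_le_mul_of_nonneg_left hlower hδ.le
end

section
/- Let δ₀>0 and δ>12δ₀ be real numbers. For every real x with x ≥ 4δ₀/δ, one has δ₀·(1+e^{−x}) < δ·(1−e^{−x}). (Equivalently, the relative rounding error bound (|x₁|+|y₁|)δ₀/|x₁−y₁| for the subtraction with x₁=1, y₁=e^{−x} is strictly below δ, so no δ-cancellation occurs in J₁.) -/
/-! With `E = exp (-x)`, the claim reads `E * (δ + δ₀) < δ - δ₀`. The tangent line bound
`1 + x ≤ exp x` gives `E ≤ δ / (δ + 4 * δ₀)`, and then the claim reduces to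
`δ * (δ + δ₀) < (δ - δ₀) * (δ + 4 * δ₀)`, that is, to `2 * δ₀ < δ`. -/

theorem no_delta_cancellation_J1
    (δ₀ δ : ℝ) (hδ₀ : 0 < δ₀) (hδ : 12 * δ₀ < δ)
    (x : ℝ) (hx : 4 * δ₀ / δ ≤ x) :
    δ₀ * (1 + Real.exp (-x)) < δ * (1 - Real.exp (-x)) := by
  have hδpos : 0 < δ := by linarith
  have hx' : 4 * δ₀ ≤ x * δ := (div_le_iff₀ hδpos).mp hx
  have hbound : Real.exp (-x) ≤ δ / (δ + 4 * δ₀) := by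
    rw [Real.exp_neg, inv_le_comm₀ (Real.exp_pos x) (by positivity), inv_div,
      div_le_iff₀ hδpos]
    nlinarith [Real.add_one_le_exp x]
  have hfrac : δ / (δ + 4 * δ₀) < (δ - δ₀) / (δ + δ₀) := by
    rw [div_lt_div_iff₀ (by positivity) (by positivity)]
    nlinarith [mul_pos hδ₀ (show 0 < δ - 2 * δ₀ by linarith)]
  have hE : Real.exp (-x) * (δ + δ₀) < δ - δ₀ :=
    (lt_div_iff₀ (by positivity)).mp (hbound.trans_lt hfrac)
  linarith
end

section
/- Let δ₀>0 and δ>12δ₀ be real numbers. For every real x with x ≥ √(12δ₀/δ), one has δ₀·(1+(1+x)e^{−x}) < δ·(1−(1+x)e^{−x}). (Equivalently, the relative rounding error bound for the subtraction with x₁=1, y₁=(1+x)e^{−x} is strictly below δ, so no δ-cancellation occurs in J₂.) -/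
/-!
Write `g x = (1 + x) * exp (-x)` and `t = √(12 * δ₀ / δ) ∈ (0, 1)`, so that `δ₀ = δ * t ^ 2 / 12`.
The claim is `g x < (12 - t ^ 2) / (12 + t ^ 2)`. Since `g` is antitone on `[0, ∞)`, it suffices to
treat `x = t`, where it reads `(1 + t) * (12 + t ^ 2) < (12 - t ^ 2) * exp t`. This follows from
`exp t ≥ 1 + t + t ^ 2 / 2`, which leaves `2 * t ^ 3 + t ^ 4 / 2 < 4 * t ^ 2`, true on `(0, 1)`.
-/

lemma one_add_mul_exp_neg_anti {t x : ℝ} (ht : 0 ≤ t) (hx : t ≤ x) :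
    (1 + x) * Real.exp (-x) ≤ (1 + t) * Real.exp (-t) := by
  -- Multiplied by `exp x`, the claim is `1 + x ≤ (1 + t) * exp (x - t)`.
  have h1 : 1 + x ≤ (1 + t) * Real.exp (x - t) := by
    nlinarith [Real.add_one_le_exp (x - t), mul_nonneg ht (sub_nonneg.2 hx)]
  calc (1 + x) * Real.exp (-x) ≤ (1 + t) * Real.exp (x - t) * Real.exp (-x) := by gcongr
    _ = (1 + t) * Real.exp (-t) := by
      rw [mul_assoc, ← Real.exp_add]
      ring_nf

lemma one_add_mul_exp_neg_lt {t : ℝ} (ht : 0 < t) (ht1 : t < 1) :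
    (12 + t ^ 2) * ((1 + t) * Real.exp (-t)) < 12 - t ^ 2 := by
  have hpos : 0 < 12 - t ^ 2 := by nlinarith
  have hpoly : (12 + t ^ 2) * (1 + t) < (12 - t ^ 2) * (1 + t + t ^ 2 / 2) := by
    have h2 : 0 < t ^ 2 := by positivity
    have h3 : t ^ 2 * t < t ^ 2 * 1 := by gcongr
    have h4 : t ^ 2 * t ^ 2 < t ^ 2 * 1 := by gcongr; nlinarith
    nlinarith
  have hexp : (12 + t ^ 2) * (1 + t) < (12 - t ^ 2) * Real.exp t :=
    hpoly.trans_le (by gcongr; exact Real.quadratic_le_exp_of_nonneg ht.le)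
  rw [Real.exp_neg, ← mul_assoc, ← div_eq_mul_inv, div_lt_iff₀ (Real.exp_pos t)]
  exact hexp

theorem no_delta_cancellation_J2
    (δ₀ δ : ℝ) (hδ₀ : 0 < δ₀) (hδ : 12 * δ₀ < δ)
    (x : ℝ) (hx : Real.sqrt (12 * δ₀ / δ) ≤ x) :
    δ₀ * (1 + (1 + x) * Real.exp (-x)) < δ * (1 - (1 + x) * Real.exp (-x)) := by
  have hδpos : 0 < δ := by linarith
  have hq : 0 < 12 * δ₀ / δ := by positivity
  have hsq : Real.sqrt (12 * δ₀ / δ) ^ 2 = 12 * δ₀ / δ := Real.sq_sqrt hq.le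
  have ht : 0 < Real.sqrt (12 * δ₀ / δ) := Real.sqrt_pos.2 hq
  have ht1 : Real.sqrt (12 * δ₀ / δ) < 1 := by
    rw [Real.sqrt_lt' one_pos, one_pow, div_lt_one hδpos]
    exact hδ
  have hg := one_add_mul_exp_neg_anti ht.le hx
  have hlt := one_add_mul_exp_neg_lt ht ht1
  generalize Real.sqrt (12 * δ₀ / δ) = t at *
  have hδ₀t : δ₀ = δ * t ^ 2 / 12 := by
    rw [hsq]
    field_simp
  have hlt' : (12 + t ^ 2) * ((1 + x) * Real.exp (-x)) < 12 - t ^ 2 :=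
    lt_of_le_of_lt (by gcongr) hlt
  have := mul_lt_mul_of_pos_left hlt' hδpos
  rw [hδ₀t]
  linarith
end

section
/- Let x > 0 be real and let N ≥ 1 be an integer. Then e^x − ∑_{m=0}^{N} x^m/m! < x^N · (e^x − 1). -/
/-! Expand both sides as power series. The left side is the tail
`∑ x ^ (k + N + 1) / (k + N + 1)!` and the right side is `∑ x ^ N * (x ^ (k + 1) / (k + 1)!)`, both
over `k ≥ 0`. The powers of `x` agree term by term, and `(k + 1)! < (k + N + 1)!` for `N ≥ 1`, so
every term on the left is strictly smaller than the corresponding one on the right. -/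

theorem taylor_truncation_J1 (x : ℝ) (hx : 0 < x) (N : ℕ) (hN : 1 ≤ N) :
    Real.exp x - ∑ m ∈ Finset.range (N + 1), x ^ m / (Nat.factorial m : ℝ)
      < x ^ N * (Real.exp x - 1) := by
  have h : HasSum (fun n : ℕ => x ^ n / (Nat.factorial n : ℝ)) (Real.exp x) := by
    rw [Real.exp_eq_exp_ℝ]
    exact NormedSpace.expSeries_div_hasSum_exp x
  have hl := (hasSum_nat_add_iff' (N + 1)).mpr h
  have hr := ((hasSum_nat_add_iff' 1).mpr h).mul_left (x ^ N)
  have h1 : ∑ m ∈ Finset.range 1, x ^ m / (Nat.factorial m : ℝ) = 1 := by simp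
  rw [h1] at hr
  have hlt : ∀ k : ℕ, x ^ (k + (N + 1)) / (Nat.factorial (k + (N + 1)) : ℝ)
      < x ^ N * (x ^ (k + 1) / (Nat.factorial (k + 1) : ℝ)) := by
    intro k
    have hf : Nat.factorial (k + 1) < Nat.factorial (k + (N + 1)) :=
      (Nat.factorial_lt (Nat.succ_pos k)).mpr (by omega)
    rw [← mul_div_assoc, ← pow_add, show N + (k + 1) = k + (N + 1) by ring]
    exact div_lt_div_of_pos_left (pow_pos hx _) (by exact_mod_cast Nat.factorial_pos _)
      (by exact_mod_cast hf)
  exact hasSum_lt (fun k => (hlt k).le) (hlt 0) hl hr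
end

section
/- Let x > 0 be real and let N ≥ 1 be an integer. Then e^x − ∑_{m=0}^{N+1} x^m/m! < x^N · (e^x − 1 − x). -/
/-!
Both sides are tails of the exponential series: the left side is `∑ₙ x ^ (n + N + 2) / (n + N + 2)!`
and the right side is `x ^ N * ∑ₙ x ^ (n + 2) / (n + 2)!`. The numerators agree term by term, so the
inequality follows from `(n + 2)! < (n + N + 2)!`.
-/

theorem taylor_truncation_J2 (x : ℝ) (hx : 0 < x) (N : ℕ) (hN : 1 ≤ N) :
    Real.exp x - ∑ m ∈ Finset.range (N + 2), x ^ m / (Nat.factorial m : ℝ)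
      < x ^ N * (Real.exp x - 1 - x) := by
  have hexp : HasSum (fun n : ℕ => x ^ n / (Nat.factorial n : ℝ)) (Real.exp x) := by
    rw [Real.exp_eq_exp_ℝ]
    exact NormedSpace.expSeries_div_hasSum_exp x
  have hleft := (hasSum_nat_add_iff' (N + 2)).2 hexp
  have hright := ((hasSum_nat_add_iff' 2).2 hexp).mul_left (x ^ N)
  have hhead : ∑ m ∈ Finset.range 2, x ^ m / (Nat.factorial m : ℝ) = 1 + x := by
    simp [Finset.sum_range_succ]
  rw [hhead, ← sub_sub] at hright
  have hterm : ∀ n : ℕ, x ^ (n + (N + 2)) / (Nat.factorial (n + (N + 2)) : ℝ)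
      < x ^ N * (x ^ (n + 2) / (Nat.factorial (n + 2) : ℝ)) := by
    intro n
    rw [← mul_div_assoc, ← pow_add, show N + (n + 2) = n + (N + 2) by omega]
    have hfact : Nat.factorial (n + 2) < Nat.factorial (n + (N + 2)) :=
      (Nat.factorial_lt (by omega)).2 (by omega)
    exact div_lt_div_of_pos_left (by positivity) (by positivity) (by exact_mod_cast hfact)
  exact hasSum_lt (fun n => (hterm n).le) (hterm 0) hleft hright
end

section
/- Let 0<α<1, let θ be real with 0<θ<1, and let M ≥ 1 be an integer. Set E = (1 − (1-θ)^{1-α}) + ∑_{m=1}^{M} binom(1-α, m)(-θ)^m. Then 0 < E < θ^M · (1 − (1-θ)^{1-α}). -/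
/-!
Put `r = 1 - α ∈ (0, 1)` and `a m = -binom(r, m) (-1)^m`, so that the binomial series reads
`1 - (1 - θ)^r = ∑_{m ≥ 1} a m θ^m`. The ratio `a (m+1) / a m = (m - r) / (m + 1)` lies in `(0, 1)`
for `m ≥ 1` and `a 1 = r > 0`, so `a` is positive and strictly decreasing on `m ≥ 1`
(`binomCoeff_pos`, `binomCoeff_succ_lt`). The error is the tail
`E = ∑_{m ≥ 1} a (m + M) θ^(m + M)`. It is positive termwise, and since `a (m + M) < a m` it is
termwise smaller than `θ^M` times the whole series.
-/

/-- Generalized binomial coefficient `binom(r, m) = r(r-1)⋯(r-m+1)/m!`. -/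
noncomputable def genBinom (r : ℝ) (m : ℕ) : ℝ :=
  (∏ i ∈ Finset.range m, (r - i)) / (Nat.factorial m : ℝ)

lemma genBinom_eq_choose (r : ℝ) (m : ℕ) : genBinom r m = Ring.choose r m := by
  rw [Ring.choose_eq_smul, genBinom, ← descPochhammer_eval_eq_prod_range,
    ← Polynomial.aeval_eq_smeval, Polynomial.aeval_def, ← Polynomial.eval_map,
    descPochhammer_map, smul_eq_mul, div_eq_inv_mul]

/-- The coefficient of `θ^m` in the expansion of `1 - (1 - θ)^r` for `m ≥ 1`; at `m = 0` its value
is `-1`, the constant term of `-(1 - θ)^r`. -/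
noncomputable def binomCoeff (r : ℝ) (m : ℕ) : ℝ := -(genBinom r m * (-1) ^ m)

lemma binomCoeff_zero (r : ℝ) : binomCoeff r 0 = -1 := by
  simp [binomCoeff, genBinom]

lemma binomCoeff_succ (r : ℝ) (m : ℕ) :
    binomCoeff r (m + 1) = binomCoeff r m * ((m - r) / (m + 1)) := by
  have hm : (m : ℝ) + 1 ≠ 0 := by positivity
  have hf : (m.factorial : ℝ) ≠ 0 := by positivity
  simp only [binomCoeff, genBinom, Finset.prod_range_succ, Nat.factorial_succ, pow_succ]
  push_cast
  field_simp
  ring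

lemma binomCoeff_pos {r : ℝ} (h0 : 0 < r) (h1 : r < 1) (m : ℕ) : 0 < binomCoeff r (m + 1) := by
  induction m with
  | zero => simp [binomCoeff_succ, binomCoeff_zero, h0]
  | succ k ih =>
    rw [binomCoeff_succ]
    push_cast
    have hk : (0 : ℝ) ≤ k := k.cast_nonneg
    exact mul_pos ih (div_pos (by linarith) (by linarith))

lemma binomCoeff_succ_lt {r : ℝ} (h0 : 0 < r) (h1 : r < 1) (m : ℕ) :
    binomCoeff r (m + 1 + 1) < binomCoeff r (m + 1) := by
  rw [binomCoeff_succ r (m + 1)]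
  push_cast
  have hk : (0 : ℝ) ≤ m := m.cast_nonneg
  refine mul_lt_of_lt_one_right (binomCoeff_pos h0 h1 m) ?_
  rw [div_lt_one (by linarith)]
  linarith

lemma binomCoeff_mul_pow (r θ : ℝ) (m : ℕ) :
    binomCoeff r m * θ ^ m = -(genBinom r m * (-θ) ^ m) := by
  rw [binomCoeff, neg_pow θ m]
  ring

lemma hasSum_binomCoeff (r : ℝ) {θ : ℝ} (h0 : 0 < θ) (h1 : θ < 1) :
    HasSum (fun m => binomCoeff r m * θ ^ m) (-(1 - θ) ^ r) := by
  have hθ : -θ ∈ Metric.eball (0 : ℝ) 1 := by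
    rw [← ENNReal.ofReal_one, Metric.eball_ofReal]
    simpa [abs_of_pos h0] using h1
  have h := (Real.one_add_rpow_hasFPowerSeriesOnBall_zero (a := r)).hasSum hθ
  simp only [binomCoeff_mul_pow, genBinom_eq_choose]
  simpa [binomialSeries, FormalMultilinearSeries.coeff_ofScalars, sub_eq_add_neg, mul_comm]
    using h.neg

/-- The error after `M` terms is the tail of the series; `M = 0` gives the series of
`1 - (1 - θ)^r` itself. -/
lemma hasSum_tail (r : ℝ) {θ : ℝ} (h0 : 0 < θ) (h1 : θ < 1) (M : ℕ) :
    HasSum (fun m => binomCoeff r (m + M + 1) * θ ^ (m + M + 1))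
      (1 - (1 - θ) ^ r + ∑ m ∈ Finset.Icc 1 M, genBinom r m * (-θ) ^ m) := by
  have h := (hasSum_nat_add_iff' (M + 1)).2 (hasSum_binomCoeff r h0 h1)
  have hI : ∑ m ∈ Finset.Icc 1 M, genBinom r m * (-θ) ^ m
      = ∑ m ∈ Finset.range M, genBinom r (m + 1) * (-θ) ^ (m + 1) := by
    rw [Finset.range_eq_Ico, Finset.sum_Ico_add' (fun m => genBinom r m * (-θ) ^ m) 0 M 1]
    rfl
  have hv : 1 - (1 - θ) ^ r + ∑ m ∈ Finset.Icc 1 M, genBinom r m * (-θ) ^ m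
      = -(1 - θ) ^ r - ∑ m ∈ Finset.range (M + 1), binomCoeff r m * θ ^ m := by
    rw [hI, Finset.sum_range_succ', binomCoeff_zero]
    simp only [binomCoeff_mul_pow, Finset.sum_neg_distrib]
    ring
  rw [hv]
  exact h

theorem taylor_truncation_I1 (α : ℝ) (hα0 : 0 < α) (hα1 : α < 1)
    (θ : ℝ) (h0 : 0 < θ) (h1 : θ < 1) (M : ℕ) (hM : 1 ≤ M)
    (E : ℝ)
    (hE : E = (1 - (1 - θ) ^ (1 - α))
        + ∑ m ∈ Finset.Icc 1 M, genBinom (1 - α) m * (-θ) ^ m) :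
    0 < E ∧ E < θ ^ M * (1 - (1 - θ) ^ (1 - α)) := by
  have hr0 : 0 < 1 - α := by linarith
  have hr1 : 1 - α < 1 := by linarith
  have hT := hasSum_tail (1 - α) h0 h1 M
  rw [← hE] at hT
  have hS : HasSum (fun m => θ ^ M * (binomCoeff (1 - α) (m + 1) * θ ^ (m + 1)))
      (θ ^ M * (1 - (1 - θ) ^ (1 - α))) := by
    simpa using (hasSum_tail (1 - α) h0 h1 0).mul_left (θ ^ M)
  have hpos : ∀ m, 0 < binomCoeff (1 - α) (m + M + 1) * θ ^ (m + M + 1) := fun m =>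
    mul_pos (binomCoeff_pos hr0 hr1 _) (pow_pos h0 _)
  have hanti : StrictAnti fun m => binomCoeff (1 - α) (m + 1) :=
    strictAnti_nat_of_succ_lt (binomCoeff_succ_lt hr0 hr1)
  have hlt : ∀ m, binomCoeff (1 - α) (m + M + 1) * θ ^ (m + M + 1)
      < θ ^ M * (binomCoeff (1 - α) (m + 1) * θ ^ (m + 1)) := fun m => by
    have hm : binomCoeff (1 - α) (m + M + 1) < binomCoeff (1 - α) (m + 1) :=
      hanti (by omega : m < m + M)
    calc _ < binomCoeff (1 - α) (m + 1) * θ ^ (m + M + 1) :=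
          mul_lt_mul_of_pos_right hm (pow_pos h0 _)
      _ = _ := by ring
  exact ⟨hasSum_lt (fun m => (hpos m).le) (hpos 0) hasSum_zero hT,
    hasSum_lt (fun m => (hlt m).le) (hlt 0) hT hS⟩
end

section
/- Let 0<α<1, let θ be real with 0<θ<1, and let M ≥ 1 be an integer. Set E = ((2-α)θ + (1-θ)^{2-α} − 1) − ∑_{m=2}^{M+1} binom(2-α, m)(-θ)^m. Then 0 < E < θ^M · ((2-α)θ + (1-θ)^{2-α} − 1). -/
lemma genBinom_succ (r : ℝ) (m : ℕ) :
    genBinom r (m + 1) = genBinom r m * ((r - m) / (m + 1)) := by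
  unfold genBinom
  rw [Finset.prod_range_succ, Nat.factorial_succ]
  push_cast
  field_simp

lemma hasSum_genBinom (r : ℝ) {θ : ℝ} (h0 : 0 < θ) (h1 : θ < 1) :
    HasSum (fun m : ℕ => genBinom r m * (-θ) ^ m) ((1 - θ) ^ r) := by
  have hy : -θ ∈ Metric.eball (0 : ℝ) 1 := by
    rw [Metric.mem_eball, edist_dist, Real.dist_eq, sub_zero, abs_neg, abs_of_pos h0]
    exact ENNReal.ofReal_lt_one.2 h1
  have h := (Real.one_add_rpow_hasFPowerSeriesOnBall_zero (a := r)).hasSum hy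
  simpa [binomialSeries_apply, genBinom_eq_choose, sub_eq_add_neg,
    -FormalMultilinearSeries.apply_eq_prod_smul_coeff] using h

/-- The signed coefficients are positive and strictly decreasing from index `2` on. -/
lemma signed_genBinom_pos_lt {α : ℝ} (hα0 : 0 < α) (hα1 : α < 1) (k : ℕ) :
    0 < genBinom (2 - α) (k + 2) * (-1) ^ (k + 2) ∧
      genBinom (2 - α) (k + 3) * (-1) ^ (k + 3) <
        genBinom (2 - α) (k + 2) * (-1) ^ (k + 2) := by
  have hrec : ∀ k : ℕ, genBinom (2 - α) (k + 3) * (-1) ^ (k + 3) =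
      genBinom (2 - α) (k + 2) * (-1) ^ (k + 2) * ((k + α) / (k + 3)) := by
    intro k
    rw [genBinom_succ _ (k + 2), pow_succ]
    push_cast
    ring
  have hpos : ∀ k : ℕ, 0 < genBinom (2 - α) (k + 2) * (-1) ^ (k + 2) := by
    intro k
    induction k with
    | zero =>
      have h : 0 < (2 - α) * (2 - α - 1) := mul_pos (by linarith) (by linarith)
      simpa [genBinom, Finset.prod_range_succ] using h
    | succ k ih =>
      rw [show k + 1 + 2 = k + 3 by rfl, hrec]
      positivity
  refine ⟨hpos k, ?_⟩
  rw [hrec]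
  refine mul_lt_of_lt_one_right (hpos k) ?_
  rw [div_lt_one (by positivity)]
  linarith

theorem taylor_truncation_I2 (α : ℝ) (hα0 : 0 < α) (hα1 : α < 1)
    (θ : ℝ) (h0 : 0 < θ) (h1 : θ < 1) (M : ℕ) (hM : 1 ≤ M)
    (E : ℝ)
    (hE : E = ((2 - α) * θ + (1 - θ) ^ (2 - α) - 1)
        - ∑ m ∈ Finset.Icc 2 (M + 1), genBinom (2 - α) m * (-θ) ^ m) :
    0 < E ∧ E < θ ^ M * ((2 - α) * θ + (1 - θ) ^ (2 - α) - 1) := by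
  set c : ℕ → ℝ := fun k => genBinom (2 - α) (k + 2) * (-1) ^ (k + 2) with hc
  have hcpos : ∀ k, 0 < c k := fun k => (signed_genBinom_pos_lt hα0 hα1 k).1
  have hanti : StrictAnti c :=
    strictAnti_nat_of_succ_lt fun k => (signed_genBinom_pos_lt hα0 hα1 k).2
  have hterm : ∀ k, genBinom (2 - α) (k + 2) * (-θ) ^ (k + 2) = c k * θ ^ (k + 2) := by
    intro k
    rw [neg_pow]
    simp only [hc]
    ring
  have hI : HasSum (fun k => c k * θ ^ (k + 2)) ((2 - α) * θ + (1 - θ) ^ (2 - α) - 1) := by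
    have h := (hasSum_nat_add_iff' 2).2 (hasSum_genBinom (2 - α) h0 h1)
    simp only [hterm] at h
    refine (congrArg (HasSum _) ?_).mp h
    simp [Finset.sum_range_succ, genBinom]
    ring
  have hsum : ∑ m ∈ Finset.Icc 2 (M + 1), genBinom (2 - α) m * (-θ) ^ m =
      ∑ k ∈ Finset.range M, c k * θ ^ (k + 2) := by
    rw [← Finset.Ico_add_one_right_eq_Icc, Finset.sum_Ico_eq_sum_range]
    refine Finset.sum_congr (by simp) fun k _ => ?_
    rw [add_comm 2 k, hterm]
  have hT : HasSum (fun k => c (k + M) * θ ^ (k + M + 2)) E := by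
    rw [hE, hsum]
    exact (hasSum_nat_add_iff' M).2 hI
  have hpos : ∀ k, 0 < c (k + M) * θ ^ (k + M + 2) := fun k =>
    mul_pos (hcpos _) (by positivity)
  have hlt : ∀ k, c (k + M) * θ ^ (k + M + 2) < θ ^ M * (c k * θ ^ (k + 2)) := by
    intro k
    have h : c (k + M) * θ ^ (k + M + 2) < c k * θ ^ (k + M + 2) :=
      mul_lt_mul_of_pos_right (hanti (by omega)) (by positivity)
    calc _ < _ := h
      _ = _ := by ring
  exact ⟨hasSum_lt (fun k => (hpos k).le) (hpos 0) hasSum_zero hT,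
    hasSum_lt (fun k => (hlt k).le) (hlt 0) hT (hI.mul_left _)⟩
end
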